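/- arXiv:1805.07430 — 2 statements merged into one kernel-verified Lean document; each statement's English description precedes it below -/
import Mathlib

section
/- There is an absolute constant C > 0 such that the following holds. Let the BARRONS iterates x_1, …, x_T be as in the context with parameters 0 < β ≤ 1/2 and 0 < η ≤ 1. Then for any u ∈ Δ̄_N, Σ_{t=1}^T ( D_{ψ_t}(u, x_t) − D_{ψ_t}(u, x_{t+1}) − (β/2)·⟨∇_t, x_t − u⟩² ) ≤ C·N·ln T/η − (1/(8·η·ln T))·Σ_{i=1}^N max_{t∈[T]} u_i/x_{t,i}. -/
/-!
Fix a coordinate `i` and put `L = ln T`, `w = N u_i` and `a_t = ln (1 / (N x_{t,i})) / L`, so that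
`u_i / x_{t,i} = w exp (a_t L)`. With `M_t` the running maximum of `a`, the barrier has weight
`1 / η_{t,i} = exp (-M_t) / η`, and with `h y = y - 1 - ln y` the potential
`exp (-M_t) h (w exp (a_{t+1} L)) + w exp (M_t L) / (8 L) - M_t / 4` decreases in each step by at
least `η` times the barrier term of that step. Indeed the weight changes only when `M_t = a_t`, and
then the gap `h (w exp (M_t L))` is so large that the loss of weight pays for the growth of
`w exp (M_t L) / (8 L)`, up to a quarter of the growth of `M_t`. Since `M_t ≤ 1`, this leaves the
negative term. The quadratic part telescopes, because each rank-one update of `A` is compensated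
by the term `⟨∇_t, x_t - u⟩²`.
-/

open Finset Real

open scoped Matrix

section Telescoping

lemma sum_Icc_one_le_sub_of_le_sub {M : Type*} [AddCommGroup M] [PartialOrder M]
    [IsOrderedAddMonoid M] {a P : ℕ → M} {n : ℕ} (h : ∀ t < n, a (t + 1) ≤ P t - P (t + 1)) :
    ∑ t ∈ Icc 1 n, a t ≤ P 0 - P n := by
  calc ∑ t ∈ Icc 1 n, a t = ∑ t ∈ range n, a (t + 1) := by
        rw [range_eq_Ico, sum_Ico_add' a 0 n 1, zero_add, Ico_add_one_right_eq_Icc]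
    _ ≤ ∑ t ∈ range n, (P t - P (t + 1)) := sum_le_sum fun t ht => h t (mem_range.1 ht)
    _ = P 0 - P n := sum_range_sub' P n

end Telescoping

section RunningMax

/-- The running maximum of `0, a 1, …, a n`. The floor at `0` is the value of the inner real
supremum over the empty type when `s ∉ Icc 1 n`. -/
noncomputable def runningMax (a : ℕ → ℝ) (n : ℕ) : ℝ := ⨆ s ∈ Icc 1 n, a s

variable {a : ℕ → ℝ} {n : ℕ}

lemma runningMax_le {b : ℝ} (hb : 0 ≤ b) (h : ∀ s ∈ Icc 1 n, a s ≤ b) : runningMax a n ≤ b :=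
  Real.iSup_le (fun s => Real.iSup_le (h s) hb) hb

lemma bddAbove_range_iSup_mem_Icc : BddAbove (Set.range fun s => ⨆ _ : s ∈ Icc 1 n, a s) := by
  refine ⟨∑ s ∈ Icc 1 n, |a s|, ?_⟩
  rintro _ ⟨s, rfl⟩
  refine Real.iSup_le (fun hs => (le_abs_self _).trans ?_) (sum_nonneg fun _ _ => abs_nonneg _)
  exact single_le_sum (f := fun s => |a s|) (fun _ _ => abs_nonneg _) hs

lemma le_runningMax {s : ℕ} (hs : s ∈ Icc 1 n) : a s ≤ runningMax a n :=
  le_ciSup_of_le bddAbove_range_iSup_mem_Icc s (ciSup_pos (f := fun _ => a s) hs).ge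

lemma runningMax_nonneg : 0 ≤ runningMax a n :=
  le_ciSup_of_le bddAbove_range_iSup_mem_Icc 0 (by simp)

lemma runningMax_zero : runningMax a 0 = 0 :=
  (runningMax_le le_rfl (by simp)).antisymm runningMax_nonneg

lemma runningMax_succ : runningMax a (n + 1) = max (runningMax a n) (a (n + 1)) := by
  refine le_antisymm (runningMax_le (le_max_of_le_left runningMax_nonneg) fun s hs => ?_)
    (max_le (runningMax_le runningMax_nonneg fun s hs => ?_) (le_runningMax (by simp)))
  · rcases (mem_Icc.1 hs).2.eq_or_lt with rfl | hlt
    · exact le_max_right _ _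
    · exact le_max_of_le_left (le_runningMax (by grind))
  · exact le_runningMax (Icc_subset_Icc_right n.le_succ hs)

end RunningMax

section BarrierGap

/-- The gap `y - 1 - ln y` between `ln` and its tangent at `1`. The Bregman divergence of `-ln`
from `q` to `p` is `barrierGap (p / q)`. -/
noncomputable def barrierGap (y : ℝ) : ℝ := y - 1 - log y

lemma barrierGap_nonneg {y : ℝ} (hy : 0 < y) : 0 ≤ barrierGap y :=
  sub_nonneg.2 (log_le_sub_one_of_pos hy)

lemma half_sub_one_le_barrierGap {y : ℝ} (hy : 0 < y) : y / 2 - 1 ≤ barrierGap y := by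
  have hlog := log_le_sub_one_of_pos (half_pos hy)
  rw [log_div hy.ne' two_ne_zero] at hlog
  unfold barrierGap
  linarith [log_two_lt_d9]

lemma log_one_div_bregman {p q : ℝ} (hp : 0 < p) (hq : 0 < q) :
    log (1 / p) - log (1 / q) + 1 / q * (p - q) = barrierGap (p / q) := by
  rw [barrierGap, log_div hp.ne' hq.ne', one_div, one_div, log_inv, log_inv]
  field_simp
  ring

end BarrierGap

section BarrierPotential

lemma exp_mul_sub_le_exp_sub_exp (a b : ℝ) : exp b * (a - b) ≤ exp a - exp b := by
  have hexp : exp a = exp b * exp (a - b) := by rw [← exp_add, add_sub_cancel]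
  rw [hexp]
  nlinarith [add_one_le_exp (a - b), exp_pos b]

lemma quarter_mul_sub_le_exp_neg_sub_exp_neg {m m' : ℝ} (hm : m ≤ m') (hm' : m' ≤ 1) :
    (m' - m) / 4 ≤ exp (-m) - exp (-m') := by
  have hquarter : 1 / 4 ≤ exp (-m') := by
    linarith [exp_neg_one_gt_d9, exp_le_exp.2 (neg_le_neg hm')]
  calc (m' - m) / 4 = 1 / 4 * (-m - -m') := by ring
    _ ≤ exp (-m') * (-m - -m') := by gcongr; linarith
    _ ≤ exp (-m) - exp (-m') := exp_mul_sub_le_exp_sub_exp _ _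

lemma exp_neg_sub_exp_neg_mul_barrierGap_le {L w m m' : ℝ} (hL : 0 < L) (hw : 0 < w)
    (hm : m ≤ m') (hm' : m' ≤ 1) :
    (exp (-m') - exp (-m)) * barrierGap (w * exp (m' * L))
      ≤ (w * exp (m * L) / (8 * L) - m / 4) - (w * exp (m' * L) / (8 * L) - m' / 4) := by
  set y := w * exp (m' * L)
  have hy : 0 < y := by positivity
  have hgrowth : (y - w * exp (m * L)) / (8 * L) ≤ (m' - m) / 8 * y := by
    have := mul_le_mul_of_nonneg_left (exp_mul_sub_le_exp_sub_exp (m * L) (m' * L)) hw.le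
    rw [div_le_iff₀ (by positivity)]
    linarith
  have hgap : (m' - m) / 4 * (y / 2 - 1) ≤ (exp (-m) - exp (-m')) * barrierGap y :=
    calc (m' - m) / 4 * (y / 2 - 1) ≤ (m' - m) / 4 * barrierGap y :=
          mul_le_mul_of_nonneg_left (half_sub_one_le_barrierGap hy) (by linarith)
      _ ≤ (exp (-m) - exp (-m')) * barrierGap y :=
          mul_le_mul_of_nonneg_right (quarter_mul_sub_le_exp_neg_sub_exp_neg hm hm')
            (barrierGap_nonneg hy)
  rw [sub_div] at hgrowth
  linarith

/-- The potential of one coordinate of the log-barrier, whose decrease in a step bounds the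
barrier term of that step. Here `w * exp (a t * L)` is the ratio `u / x t` of comparator and
iterate, and `exp (-runningMax a t)` is the barrier weight. -/
noncomputable def barrierPotential (L w : ℝ) (a : ℕ → ℝ) (t : ℕ) : ℝ :=
  exp (-runningMax a t) * barrierGap (w * exp (a (t + 1) * L))
    + (w * exp (runningMax a t * L) / (8 * L) - runningMax a t / 4)

variable {L w : ℝ} {a : ℕ → ℝ}

lemma exp_neg_runningMax_mul_gap_sub_le (hL : 0 < L) (hw : 0 < w) {t : ℕ}
    (ha : a (t + 1) ≤ 1) :
    exp (-runningMax a (t + 1)) *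
        (barrierGap (w * exp (a (t + 1) * L)) - barrierGap (w * exp (a (t + 1 + 1) * L)))
      ≤ barrierPotential L w a t - barrierPotential L w a (t + 1) := by
  unfold barrierPotential
  rcases le_total (a (t + 1)) (runningMax a t) with hle | hle
  · rw [runningMax_succ, max_eq_left hle]
    linarith
  · rw [runningMax_succ, max_eq_right hle]
    linarith [exp_neg_sub_exp_neg_mul_barrierGap_le hL hw hle ha]

lemma sum_exp_neg_runningMax_mul_gap_sub_le {T : ℕ} (hL : 0 < L) (hw : 0 < w)
    (ha : ∀ t ∈ Icc 1 T, a t ≤ 1) :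
    ∑ t ∈ Icc 1 T, exp (-runningMax a t) *
        (barrierGap (w * exp (a t * L)) - barrierGap (w * exp (a (t + 1) * L)))
      ≤ barrierGap (w * exp (a 1 * L)) + w / (8 * L) + 1 / 4
        - w * exp (runningMax a T * L) / (8 * L) := by
  have htele := sum_Icc_one_le_sub_of_le_sub (n := T) (P := barrierPotential L w a)
    (a := fun t => exp (-runningMax a t) *
      (barrierGap (w * exp (a t * L)) - barrierGap (w * exp (a (t + 1) * L))))
    fun t ht => exp_neg_runningMax_mul_gap_sub_le hL hw (ha _ (mem_Icc.2 (by omega)))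
  have hstart : barrierPotential L w a 0 = barrierGap (w * exp (a 1 * L)) + w / (8 * L) := by
    simp [barrierPotential, runningMax_zero]
  have hend : 0 ≤ exp (-runningMax a T) * barrierGap (w * exp (a (T + 1) * L)) :=
    mul_nonneg (exp_pos _).le (barrierGap_nonneg (by positivity))
  have hmax := runningMax_le zero_le_one ha
  rw [hstart] at htele
  refine htele.trans ?_
  unfold barrierPotential
  linarith

end BarrierPotential

section IncreasingRates

variable {T : ℕ} {n v : ℝ} {y : ℕ → ℝ}

/-- The exponent of the increasing learning rate of one coordinate: `y t` is
`T ^ (-rateExponent n T y t) / n`. -/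
noncomputable def rateExponent (n : ℝ) (T : ℕ) (y : ℕ → ℝ) (t : ℕ) : ℝ :=
  log (1 / (n * y t)) / log T

lemma div_eq_mul_exp_rateExponent_mul_log (hT : 1 < T) (hn : 0 < n) {t : ℕ} (hy : 0 < y t) :
    v / y t = n * v * exp (rateExponent n T y t * log T) := by
  rw [rateExponent, div_mul_cancel₀ _ (log_pos (Nat.one_lt_cast.2 hT)).ne', exp_log (by positivity)]
  field_simp

lemma rateExponent_le_one (hT : 1 < T) (hn : 0 < n) {t : ℕ} (hy : 1 / (n * T) ≤ y t) :
    rateExponent n T y t ≤ 1 := by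
  have hy0 : 0 < y t := (by positivity : 0 < 1 / (n * T)).trans_le hy
  rw [rateExponent, div_le_one (log_pos (Nat.one_lt_cast.2 hT))]
  refine log_le_log (by positivity) ?_
  rw [div_le_iff₀ (by positivity)] at hy ⊢
  linarith

lemma barrierGap_mul_le (hT : 0 < T) (hn : 0 < n) (hv : 1 / (n * T) ≤ v) :
    barrierGap (n * v) ≤ n * v - 1 + log T := by
  have hT0 : (0 : ℝ) < T := Nat.cast_pos.2 hT
  have hlog : log (T : ℝ)⁻¹ ≤ log (n * v) := by
    refine log_le_log (by positivity) ?_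
    rw [inv_le_iff_one_le_mul₀ hT0]
    rw [div_le_iff₀ (by positivity)] at hv
    linarith
  rw [log_inv] at hlog
  unfold barrierGap
  linarith

lemma runningMax_div_le (hT : 1 < T) (hn : 0 < n) (hv : 0 ≤ v)
    (hy : ∀ t ∈ Icc 1 T, 0 < y t) :
    runningMax (fun t => v / y t) T
      ≤ n * v * exp (runningMax (rateExponent n T y) T * log T) := by
  refine runningMax_le (by positivity) fun t ht => ?_
  rw [div_eq_mul_exp_rateExponent_mul_log hT hn (hy t ht)]
  have := le_runningMax (a := rateExponent n T y) ht
  gcongr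

lemma one_le_log_natCast (hT : 3 ≤ T) : 1 ≤ log T := by
  rw [le_log_iff_exp_le (by positivity)]
  exact exp_one_lt_three.le.trans (by exact_mod_cast hT)

lemma sum_barrierGap_sub_div_rate_le {η : ℝ} {rate : ℕ → ℝ} (hT : 3 ≤ T) (hη : 0 < η)
    (hn : 0 < n) (hy1 : y 1 = 1 / n) (hy : ∀ t ∈ Icc 1 (T + 1), 1 / (n * T) ≤ y t)
    (hv : 1 / (n * T) ≤ v)
    (hrate : ∀ t ∈ Icc 1 T, rate t = η * exp (runningMax (rateExponent n T y) t)) :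
    ∑ t ∈ Icc 1 T, 1 / rate t * (barrierGap (v / y t) - barrierGap (v / y (t + 1)))
      ≤ 1 / η * (2 * (n * v) + log T - 3 / 4)
        - 1 / (8 * η * log T) * runningMax (fun t => v / y t) T := by
  have hlog := one_le_log_natCast hT
  have hT1 : 1 < T := by omega
  have hfloor : 0 < 1 / (n * T) := by positivity
  have hv0 : 0 < v := hfloor.trans_le hv
  have hy0 : ∀ t ∈ Icc 1 (T + 1), 0 < y t := fun t ht => hfloor.trans_le (hy t ht)
  have hsub : Icc 1 T ⊆ Icc 1 (T + 1) := Icc_subset_Icc_right T.le_succ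
  set a := rateExponent n T y
  have hratio : ∀ t ∈ Icc 1 (T + 1), v / y t = n * v * exp (a t * log T) := fun t ht =>
    div_eq_mul_exp_rateExponent_mul_log hT1 hn (hy0 t ht)
  have hpot := sum_exp_neg_runningMax_mul_gap_sub_le (a := a) (by linarith) (mul_pos hn hv0)
    fun t ht => rateExponent_le_one hT1 hn (hy t (hsub ht))
  have hfirst : barrierGap (n * v * exp (a 1 * log T)) ≤ n * v - 1 + log T := by
    rw [← hratio 1 (by simp), hy1, div_div_eq_mul_div, div_one, mul_comm]
    exact barrierGap_mul_le (by omega) hn hv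
  have hweight : n * v / (8 * log T) ≤ n * v := div_le_self (by positivity) (by linarith)
  have hmax : runningMax (fun t => v / y t) T / (8 * log T)
      ≤ n * v * exp (runningMax a T * log T) / (8 * log T) := by
    gcongr
    exact runningMax_div_le hT1 hn hv0.le fun t ht => hy0 t (hsub ht)
  calc ∑ t ∈ Icc 1 T, 1 / rate t * (barrierGap (v / y t) - barrierGap (v / y (t + 1)))
      = 1 / η * ∑ t ∈ Icc 1 T, exp (-runningMax a t) * (barrierGap (n * v * exp (a t * log T))
          - barrierGap (n * v * exp (a (t + 1) * log T))) := by
        rw [mul_sum]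
        refine sum_congr rfl fun t ht => ?_
        rw [hrate t ht, hratio t (hsub ht), hratio (t + 1) (by grind), exp_neg]
        field_simp
    _ ≤ 1 / η * (2 * (n * v) + log T - 3 / 4
          - runningMax (fun t => v / y t) T / (8 * log T)) := by
        gcongr
        linarith
    _ = 1 / η * (2 * (n * v) + log T - 3 / 4)
          - 1 / (8 * η * log T) * runningMax (fun t => v / y t) T := by
        field_simp

lemma sum_sum_barrierGap_sub_div_rate_le {N : ℕ} {η : ℝ} {rate x : ℕ → Fin N → ℝ} {u : Fin N → ℝ}
    (hT : 3 ≤ T) (hη : 0 < η) (hx1 : ∀ i, x 1 i = 1 / N)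
    (hx : ∀ t ∈ Icc 1 (T + 1), ∀ i, 1 / ((N : ℝ) * T) ≤ x t i)
    (hu : ∑ i, u i = 1) (hufloor : ∀ i, 1 / ((N : ℝ) * T) ≤ u i)
    (hrate : ∀ t ∈ Icc 1 T, ∀ i,
      rate t i = η * exp (runningMax (rateExponent N T fun s => x s i) t)) :
    ∑ t ∈ Icc 1 T, ∑ i, 1 / rate t i *
        (barrierGap (u i / x t i) - barrierGap (u i / x (t + 1) i))
      ≤ N * (log T + 5 / 4) / η
        - 1 / (8 * η * log T) * ∑ i, runningMax (fun t => u i / x t i) T := by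
  rw [sum_comm]
  calc _ ≤ ∑ i, (1 / η * (2 * (N * u i) + log T - 3 / 4)
        - 1 / (8 * η * log T) * runningMax (fun t => u i / x t i) T) :=
        sum_le_sum fun i _ => sum_barrierGap_sub_div_rate_le hT hη (Nat.cast_pos.2 i.pos) (hx1 i)
          (fun t ht => hx t ht i) (hufloor i) fun t ht => hrate t ht i
    _ = N * (log T + 5 / 4) / η
          - 1 / (8 * η * log T) * ∑ i, runningMax (fun t => u i / x t i) T := by
        simp only [sum_sub_distrib, sum_add_distrib, ← mul_sum, hu, sum_const, card_univ,
          Fintype.card_fin, nsmul_eq_mul]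
        ring

end IncreasingRates

section RankOneUpdates

variable {ι : Type*} {T : ℕ} {A : ℕ → Matrix ι ι ℝ} {g : ℕ → ι → ℝ}

lemma posSemidef_of_rank_one_updates [Finite ι] (hA0 : (A 0).PosSemidef)
    (hA : ∀ t < T, A (t + 1) = A t + Matrix.vecMulVec (g (t + 1)) (g (t + 1))) :
    ∀ t ≤ T, (A t).PosSemidef := by
  intro t
  induction t with
  | zero => exact fun _ => hA0
  | succ t ih =>
    intro ht
    rw [hA t ht]
    exact (ih (by omega)).add (by simpa using Matrix.posSemidef_vecMulVec_self_star (g (t + 1)))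

variable [Fintype ι]

lemma dotProduct_add_vecMulVec_mulVec (B : Matrix ι ι ℝ) (g v : ι → ℝ) :
    v ⬝ᵥ (B + Matrix.vecMulVec g g) *ᵥ v = v ⬝ᵥ B *ᵥ v + (g ⬝ᵥ v) ^ 2 := by
  simp [Matrix.add_mulVec, Matrix.vecMulVec_mulVec, dotProduct_comm v g, sq]

lemma sum_dotProduct_mulVec_sub_le (hA0 : (A 0).PosSemidef)
    (hA : ∀ t < T, A (t + 1) = A t + Matrix.vecMulVec (g (t + 1)) (g (t + 1)))
    (v : ℕ → ι → ℝ) :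
    ∑ t ∈ Icc 1 T, (v t ⬝ᵥ A t *ᵥ v t - v (t + 1) ⬝ᵥ A t *ᵥ v (t + 1) - (g t ⬝ᵥ v t) ^ 2)
      ≤ v 1 ⬝ᵥ A 0 *ᵥ v 1 := by
  have htele := sum_Icc_one_le_sub_of_le_sub (n := T)
    (P := fun t => v (t + 1) ⬝ᵥ A t *ᵥ v (t + 1))
    (a := fun t => v t ⬝ᵥ A t *ᵥ v t - v (t + 1) ⬝ᵥ A t *ᵥ v (t + 1) - (g t ⬝ᵥ v t) ^ 2)
    fun t ht => by rw [hA t ht, dotProduct_add_vecMulVec_mulVec]; linarith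
  have hlast : 0 ≤ v (T + 1) ⬝ᵥ A T *ᵥ v (T + 1) := by
    simpa using (posSemidef_of_rank_one_updates hA0 hA T le_rfl).dotProduct_mulVec_nonneg
      (v (T + 1))
  linarith

end RankOneUpdates

section Regularizer

variable {ι : Type*} [Fintype ι]

lemma dotProduct_mulVec_bregman {B : Matrix ι ι ℝ} (hB : B.IsSymm) (p q : ι → ℝ) :
    p ⬝ᵥ B *ᵥ p - q ⬝ᵥ B *ᵥ q - 2 * (B *ᵥ q ⬝ᵥ (p - q)) = (p - q) ⬝ᵥ B *ᵥ (p - q) := by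
  have hsymm : q ⬝ᵥ B *ᵥ p = p ⬝ᵥ B *ᵥ q := by
    rw [← Matrix.dotProduct_transpose_mulVec, hB.eq]
  simp only [Matrix.mulVec_sub, dotProduct_sub, sub_dotProduct, dotProduct_comm (B *ᵥ q)]
  linarith

lemma sum_sum_mul_mul_eq_dotProduct_mulVec (B : Matrix ι ι ℝ) (p : ι → ℝ) :
    ∑ i, ∑ j, p i * B i j * p j = p ⬝ᵥ B *ᵥ p := by
  simp only [dotProduct, Matrix.mulVec, mul_sum, mul_assoc]

/-- The Bregman divergence from `q` to `p` of the regularizer with quadratic part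
`β / 2 * (x ⬝ᵥ B *ᵥ x)` and log-barrier weights `c`, in closed form. -/
noncomputable def barrierDivergence (β : ℝ) (B : Matrix ι ι ℝ) (c p q : ι → ℝ) : ℝ :=
  β / 2 * ((p - q) ⬝ᵥ B *ᵥ (p - q)) + ∑ i, c i * barrierGap (p i / q i)

lemma barrierRegularizer_bregman {B : Matrix ι ι ℝ} (hB : B.IsSymm) (β : ℝ) (c : ι → ℝ)
    {p q : ι → ℝ} (hp : ∀ i, 0 < p i) (hq : ∀ i, 0 < q i) :
    (β / 2 * ∑ i, ∑ j, p i * B i j * p j + ∑ i, c i * log (1 / p i))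
        - (β / 2 * ∑ i, ∑ j, q i * B i j * q j + ∑ i, c i * log (1 / q i))
        - ∑ i, (β * (∑ j, B i j * q j) - c i * (1 / q i)) * (p i - q i)
      = barrierDivergence β B c p q := by
  have hbarrier : ∑ i, c i * barrierGap (p i / q i) = ∑ i, c i * log (1 / p i)
      - ∑ i, c i * log (1 / q i) + ∑ i, c i * (1 / q i) * (p i - q i) := by
    rw [← sum_sub_distrib, ← sum_add_distrib]
    refine sum_congr rfl fun i _ => ?_
    rw [← log_one_div_bregman (hp i) (hq i)]
    ring
  have hgrad : ∑ i, (β * (∑ j, B i j * q j) - c i * (1 / q i)) * (p i - q i)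
      = β * (B *ᵥ q ⬝ᵥ (p - q)) - ∑ i, c i * (1 / q i) * (p i - q i) := by
    simp only [dotProduct, Matrix.mulVec, Pi.sub_apply, mul_sum univ _ β, ← sum_sub_distrib]
    exact sum_congr rfl fun i _ => by rw [← mul_sum]; ring
  rw [barrierDivergence, hbarrier, hgrad, ← dotProduct_mulVec_bregman hB,
    sum_sum_mul_mul_eq_dotProduct_mulVec, sum_sum_mul_mul_eq_dotProduct_mulVec]
  ring

lemma barrierDivergence_sub_sub (β : ℝ) (B : Matrix ι ι ℝ) (c g u p q : ι → ℝ) :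
    barrierDivergence β B c u p - barrierDivergence β B c u q
        - β / 2 * (∑ i, g i * (p i - u i)) ^ 2
      = β / 2 * ((u - p) ⬝ᵥ B *ᵥ (u - p) - (u - q) ⬝ᵥ B *ᵥ (u - q) - (g ⬝ᵥ (u - p)) ^ 2)
        + ∑ i, c i * (barrierGap (u i / p i) - barrierGap (u i / q i)) := by
  have hneg : ∑ i, g i * (p i - u i) = -(g ⬝ᵥ (u - p)) := by
    rw [← dotProduct_neg, neg_sub]
    rfl
  simp only [barrierDivergence, hneg, mul_sub (c _), sum_sub_distrib]
  ring

end Regularizer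

lemma dotProduct_sub_self_le_two {ι : Type*} [Fintype ι] {p q : ι → ℝ}
    (hp : p ∈ stdSimplex ℝ ι) (hq : q ∈ stdSimplex ℝ ι) : (p - q) ⬝ᵥ (p - q) ≤ 2 := by
  have hle : ∀ v ∈ stdSimplex ℝ ι, v ⬝ᵥ v ≤ 1 := fun v hv => by
    refine (sum_le_sum fun i _ => ?_).trans_eq hv.2
    exact mul_le_of_le_one_right (hv.1 i) (hv.2 ▸ single_le_sum (fun j _ => hv.1 j) (mem_univ i))
  have hcross : 0 ≤ p ⬝ᵥ q := sum_nonneg fun i _ => mul_nonneg (hp.1 i) (hq.1 i)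
  simp only [dotProduct_sub, sub_dotProduct, dotProduct_comm q p]
  linarith [hle p hp, hle q hq]

lemma const_one_div_mem_stdSimplex {N : ℕ} (hN : 0 < N) :
    (fun _ => 1 / (N : ℝ)) ∈ stdSimplex ℝ (Fin N) :=
  ⟨fun _ => by positivity, by simp [hN.ne']⟩

lemma sum_dotProduct_mulVec_sub_le_two_mul {ι : Type*} [Fintype ι] [DecidableEq ι] {T : ℕ} {a : ℝ}
    {A : ℕ → Matrix ι ι ℝ} {g x : ℕ → ι → ℝ} {u : ι → ℝ} (ha : 0 ≤ a)
    (hA0 : A 0 = a • (1 : Matrix ι ι ℝ))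
    (hA : ∀ t < T, A (t + 1) = A t + Matrix.vecMulVec (g (t + 1)) (g (t + 1)))
    (hu : u ∈ stdSimplex ℝ ι) (hx1 : x 1 ∈ stdSimplex ℝ ι) :
    ∑ t ∈ Icc 1 T, ((u - x t) ⬝ᵥ A t *ᵥ (u - x t)
        - (u - x (t + 1)) ⬝ᵥ A t *ᵥ (u - x (t + 1)) - (g t ⬝ᵥ (u - x t)) ^ 2) ≤ a * 2 := by
  refine (sum_dotProduct_mulVec_sub_le (hA0 ▸ Matrix.PosSemidef.one.smul ha) hA
    fun t => u - x t).trans ?_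
  rw [hA0, Matrix.smul_mulVec, Matrix.one_mulVec, dotProduct_smul, smul_eq_mul]
  exact mul_le_mul_of_nonneg_left (dotProduct_sub_self_le_two hu hx1) ha

lemma sum_barrierDivergence_sub_le {N T : ℕ} (hT : 3 ≤ T) {β η : ℝ} (hβ : 0 ≤ β) (hη : 0 < η)
    {x g rate : ℕ → Fin N → ℝ} {A : ℕ → Matrix (Fin N) (Fin N) ℝ} {u : Fin N → ℝ}
    (hx1 : ∀ i, x 1 i = 1 / N)
    (hx : ∀ t ∈ Icc 1 (T + 1), ∀ i, 1 / ((N : ℝ) * T) ≤ x t i)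
    (hA0 : A 0 = (N : ℝ) • (1 : Matrix (Fin N) (Fin N) ℝ))
    (hA : ∀ t < T, A (t + 1) = A t + Matrix.vecMulVec (g (t + 1)) (g (t + 1)))
    (hrate : ∀ t ∈ Icc 1 T, ∀ i,
      rate t i = η * exp (runningMax (rateExponent N T fun s => x s i) t))
    (hu : u ∈ stdSimplex ℝ (Fin N)) (hufloor : ∀ i, 1 / ((N : ℝ) * T) ≤ u i) :
    ∑ t ∈ Icc 1 T,
        (barrierDivergence β (A t) (fun i => 1 / rate t i) u (x t)
          - barrierDivergence β (A t) (fun i => 1 / rate t i) u (x (t + 1))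
          - β / 2 * (∑ i, g t i * (x t i - u i)) ^ 2)
      ≤ β * N + N * (log T + 5 / 4) / η
        - 1 / (8 * η * log T) * ∑ i, runningMax (fun t => u i / x t i) T := by
  have hN : 0 < N := Nat.pos_of_ne_zero (by rintro rfl; simpa using hu.2)
  have hquad := mul_le_mul_of_nonneg_left (sum_dotProduct_mulVec_sub_le_two_mul N.cast_nonneg hA0
    hA hu (funext hx1 ▸ const_one_div_mem_stdSimplex hN)) (div_nonneg hβ zero_le_two)
  have hbarrier := sum_sum_barrierGap_sub_div_rate_le hT hη hx1 hx hu.2 hufloor hrate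
  simp only [barrierDivergence_sub_sub, sum_add_distrib, ← mul_sum (Icc 1 T)]
  linarith

theorem barrons_negative_term_general {N T : ℕ} (hT : 3 ≤ T) {β η : ℝ} (hβ : 0 ≤ β) (hη : 0 < η)
    {x : ℕ → Fin N → ℝ} (hx1 : ∀ i, x 1 i = 1 / N)
    (hx : ∀ t ∈ Icc 1 (T + 1), ∀ i, 1 / ((N : ℝ) * T) ≤ x t i)
    {g : ℕ → Fin N → ℝ} {A : ℕ → Matrix (Fin N) (Fin N) ℝ}
    (hA0 : A 0 = (N : ℝ) • (1 : Matrix (Fin N) (Fin N) ℝ))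
    (hA : ∀ t ∈ Icc 1 T, ∀ i j, A t i j = A (t - 1) i j + g t i * g t j)
    {eta : ℕ → Fin N → ℝ}
    (heta : ∀ t ∈ Icc 1 T, ∀ i,
      eta t i = η * exp (⨆ s ∈ Icc 1 t, log (1 / ((N : ℝ) * x s i)) / log T))
    {psi : ℕ → (Fin N → ℝ) → ℝ}
    (hpsi : ∀ t p, psi t p =
      β / 2 * ∑ i, ∑ j, p i * A t i j * p j + ∑ i, (1 / eta t i) * log (1 / p i))
    {gpsi : ℕ → (Fin N → ℝ) → Fin N → ℝ}
    (hgpsi : ∀ t p i, gpsi t p i = β * (∑ j, A t i j * p j) - (1 / eta t i) * (1 / p i))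
    {D : ℕ → (Fin N → ℝ) → (Fin N → ℝ) → ℝ}
    (hD : ∀ t p q, D t p q = psi t p - psi t q - ∑ i, gpsi t q i * (p i - q i))
    {u : Fin N → ℝ} (hu : u ∈ stdSimplex ℝ (Fin N)) (hufloor : ∀ i, 1 / ((N : ℝ) * T) ≤ u i) :
    ∑ t ∈ Icc 1 T,
        (D t u (x t) - D t u (x (t + 1)) - β / 2 * (∑ i, g t i * (x t i - u i)) ^ 2)
      ≤ (β * η + 9 / 4) * N * log T / η
        - (1 / (8 * η * log T)) * ∑ i, ⨆ t ∈ Icc 1 T, u i / x t i := by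
  have hlog := one_le_log_natCast hT
  have hN : 0 < N := Nat.pos_of_ne_zero (by rintro rfl; simpa using hu.2)
  have hfloor : 0 < 1 / ((N : ℝ) * T) := by positivity
  have hA_update : ∀ t < T, A (t + 1) = A t + Matrix.vecMulVec (g (t + 1)) (g (t + 1)) :=
    fun t ht => Matrix.ext (hA (t + 1) (by grind))
  have hA_symm : ∀ t ∈ Icc 1 T, (A t).IsSymm := fun t ht =>
    (posSemidef_of_rank_one_updates (hA0 ▸ Matrix.PosSemidef.one.smul N.cast_nonneg) hA_update t
      (mem_Icc.1 ht).2).isHermitian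
  have hdiv : ∀ t ∈ Icc 1 T, ∀ s ∈ Icc 1 (T + 1),
      D t u (x s) = barrierDivergence β (A t) (fun i => 1 / eta t i) u (x s) := by
    intro t ht s hs
    simp only [hD, hpsi, hgpsi]
    exact barrierRegularizer_bregman (hA_symm t ht) β _
      (fun i => hfloor.trans_le (hufloor i)) fun i => hfloor.trans_le (hx s hs i)
  calc _ = ∑ t ∈ Icc 1 T,
        (barrierDivergence β (A t) (fun i => 1 / eta t i) u (x t)
          - barrierDivergence β (A t) (fun i => 1 / eta t i) u (x (t + 1))
          - β / 2 * (∑ i, g t i * (x t i - u i)) ^ 2) :=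
        sum_congr rfl fun t ht => by rw [hdiv t ht t (by grind), hdiv t ht (t + 1) (by grind)]
    _ ≤ β * N + N * (log T + 5 / 4) / η
          - (1 / (8 * η * log T)) * ∑ i, ⨆ t ∈ Icc 1 T, u i / x t i :=
        sum_barrierDivergence_sub_le hT hβ hη hx1 hx hA0 hA_update heta hu hufloor
    _ = (β * η * N * 1 + N * (log T + 5 / 4 * 1)) / η
          - (1 / (8 * η * log T)) * ∑ i, ⨆ t ∈ Icc 1 T, u i / x t i := by
        field_simp
    _ ≤ (β * η * N * log T + N * (log T + 5 / 4 * log T)) / η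
          - (1 / (8 * η * log T)) * ∑ i, ⨆ t ∈ Icc 1 T, u i / x t i := by
        gcongr
    _ = _ := by ring

/- STATEMENT 2: Lemma 5 of the paper (Bregman-divergence terms of BARRONS with a
   negative term from the log-barrier), with an absolute constant C. -/

theorem barrons_negative_term :
    ∃ C : ℝ, 0 < C ∧
    ∀ (N T : ℕ) (_hN : 2 ≤ N) (_hT : N < T)
      (β η : ℝ) (_hβ0 : 0 < β) (_hβ : β ≤ 1 / 2) (_hη0 : 0 < η) (_hη : η ≤ 1)
      -- reward vectors: nonnegative with maximum coordinate equal to 1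
      (r : ℕ → Fin N → ℝ)
      (_hr : ∀ t ∈ Finset.Icc 1 T, (∀ i, 0 ≤ r t i) ∧ (∃ i, r t i = 1) ∧ ∀ i, r t i ≤ 1)
      -- the iterates x_1, ..., x_{T+1}
      (x : ℕ → Fin N → ℝ)
      (_hx1 : ∀ i, x 1 i = 1 / N)
      (_hxmem : ∀ t ∈ Finset.Icc 1 (T + 1),
          (∀ i, 0 ≤ x t i) ∧ (∑ i, x t i) = 1 ∧ ∀ i, 1 / ((N : ℝ) * T) ≤ x t i)
      -- the gradients ∇_t = -r_t / ⟨x_t, r_t⟩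
      (grad : ℕ → Fin N → ℝ)
      (_hgrad : ∀ t i, grad t i = -(r t i) / ∑ j, x t j * r t j)
      -- the matrices A_t
      (A : ℕ → Matrix (Fin N) (Fin N) ℝ)
      (_hA0 : A 0 = (N : ℝ) • (1 : Matrix (Fin N) (Fin N) ℝ))
      (_hA : ∀ t ∈ Finset.Icc 1 T, ∀ i j, A t i j = A (t - 1) i j + grad t i * grad t j)
      -- the individual learning rates η_{t,i}
      (eta : ℕ → Fin N → ℝ)
      (_heta : ∀ t ∈ Finset.Icc 1 T, ∀ i,
          eta t i = η * Real.exp (⨆ s ∈ Finset.Icc 1 t,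
            Real.log (1 / ((N : ℝ) * x s i)) / Real.log T))
      -- the regularizer ψ_t, its gradient, and its Bregman divergence
      (psi : ℕ → (Fin N → ℝ) → ℝ)
      (_hpsi : ∀ t p, psi t p =
          β / 2 * ∑ i, ∑ j, p i * A t i j * p j + ∑ i, (1 / eta t i) * Real.log (1 / p i))
      (gpsi : ℕ → (Fin N → ℝ) → Fin N → ℝ)
      (_hgpsi : ∀ t p i, gpsi t p i = β * (∑ j, A t i j * p j) - (1 / eta t i) * (1 / p i))
      (D : ℕ → (Fin N → ℝ) → (Fin N → ℝ) → ℝ)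
      (_hD : ∀ t p q, D t p q = psi t p - psi t q - ∑ i, gpsi t q i * (p i - q i))
      -- x_{t+1} minimizes ⟨x, ∇_t⟩ + D_{ψ_t}(x, x_t) over Δ̄_N
      (_hmin : ∀ t ∈ Finset.Icc 1 T, ∀ y : Fin N → ℝ,
          ((∀ i, 0 ≤ y i) ∧ (∑ i, y i) = 1 ∧ ∀ i, 1 / ((N : ℝ) * T) ≤ y i) →
          (∑ i, x (t + 1) i * grad t i) + D t (x (t + 1)) (x t)
            ≤ (∑ i, y i * grad t i) + D t y (x t))
      -- the comparator u ∈ Δ̄_N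
      (u : Fin N → ℝ)
      (_hu : (∀ i, 0 ≤ u i) ∧ (∑ i, u i) = 1 ∧ ∀ i, 1 / ((N : ℝ) * T) ≤ u i),
      ∑ t ∈ Finset.Icc 1 T,
          (D t u (x t) - D t u (x (t + 1))
            - β / 2 * (∑ i, grad t i * (x t i - u i)) ^ 2)
      ≤ C * N * Real.log T / η
        - (1 / (8 * η * Real.log T)) * ∑ i, ⨆ t ∈ Finset.Icc 1 T, u i / x t i := by
  refine ⟨3, three_pos, fun N T hN hT β η hβ0 hβ hη0 hη _ _ x hx1 hx _ _ A hA0 hA eta heta psi hpsi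
    gpsi hgpsi D hD _ u hu => ?_⟩
  refine (barrons_negative_term_general (by omega) hβ0.le hη0 hx1 (fun t ht => (hx t ht).2.2) hA0 hA
    heta hpsi hgpsi hD ⟨hu.1, hu.2.1⟩ hu.2.2).trans ?_
  gcongr
  nlinarith
end

section
/- Let the BARRONS iterates x_1, …, x_T be as in the context with parameters 0 < β ≤ 1/2 and 0 < η ≤ 1/300. Then for every t ∈ [T−1] and every i ∈ [N], 1 − √(3η)/2 ≤ x_{t+1,i}/x_{t,i} ≤ 1 + √(3η)/2. -/
/-!
First-order optimality of `x_{t+1}` over the convex set `Δ̄_N` gives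
`⟨∇ψ_t(x_{t+1}) - ∇ψ_t(x_t), x_{t+1} - x_t⟩ ≤ ⟨∇_t, x_t - x_{t+1}⟩`. In terms of the relative
changes `v_i = x_{t+1,i} / x_{t,i} - 1`, the log barrier contributes
`∑ i, v_i ^ 2 / (η_{t,i} * (1 + v_i))` to the left-hand side, the quadratic part of `ψ_t`
contributes a nonnegative amount, and the right-hand side is an average of the `v_i`, with weights
`x_{t,i} * r_{t,i} / ⟨x_t, r_t⟩`. Since `η_{t,i} ≤ 3 * η`, a weighted average can dominate the
barrier term only if every `|v_i|` is at most `6 * η`.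
-/

open Finset Matrix

section Bregman

variable {E : Type*} [NormedAddCommGroup E] [NormedSpace ℝ E]

/-- The Bregman divergence `D_ψ(p, q)` of a function `ψ` that is differentiable at `q`. -/
noncomputable def bregmanDiv (ψ : E → ℝ) (p q : E) : ℝ :=
  ψ p - ψ q - fderiv ℝ ψ q (p - q)

theorem fderiv_sub_fderiv_apply_le_of_isMinOn_bregmanDiv {K : Set E} (hK : Convex ℝ K)
    {ψ : E → ℝ} {ℓ : E →L[ℝ] ℝ} {x y : E} (hx : x ∈ K) (hy : y ∈ K)
    (hψ : DifferentiableAt ℝ ψ y) (hmin : IsMinOn (fun p ↦ ℓ p + bregmanDiv ψ p x) K y) :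
    (fderiv ℝ ψ y - fderiv ℝ ψ x) (y - x) ≤ ℓ (x - y) := by
  have hderiv : HasFDerivAt (fun p ↦ ℓ p + bregmanDiv ψ p x)
      (ℓ + (fderiv ℝ ψ y - fderiv ℝ ψ x)) y :=
    ℓ.hasFDerivAt.add ((hψ.hasFDerivAt.sub_const _).sub
      ((fderiv ℝ ψ x).hasFDerivAt.comp y ((hasFDerivAt_id y).sub_const x)))
  have hopt : 0 ≤ (ℓ + (fderiv ℝ ψ y - fderiv ℝ ψ x)) (x - y) :=
    hmin.localize.hasFDerivWithinAt_nonneg hderiv.hasFDerivWithinAt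
      (sub_mem_posTangentConeAt_of_segment_subset (hK.segment_subset hy hx))
  rw [← neg_sub x y, map_neg]
  rw [_root_.add_apply] at hopt
  linarith

end Bregman

section SmallRelativeChange

theorem mul_sub_sq_div_one_add_le_sq {s v : ℝ} (hs0 : 0 ≤ s) (hs1 : s ≤ 1) (hv : 0 < 1 + v) :
    s * v - v ^ 2 / (1 + v) ≤ s ^ 2 := by
  have hquad : (s * v - s ^ 2) * (1 + v) ≤ v ^ 2 := by
    nlinarith [mul_nonneg (sub_nonneg.2 hs1) (sq_nonneg (v - s / 2)),
      mul_nonneg hs0 (sq_nonneg s)]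
  have := (le_div_iff₀ hv).2 hquad
  linarith

theorem abs_le_two_mul_of_sq_div_one_add_le {b s v : ℝ} (hb : b ≤ 1 / 6) (hs0 : 0 ≤ s)
    (hsb : s ≤ b) (hv : 0 < 1 + v) (h : v ^ 2 / (1 + v) ≤ s * v + b ^ 2) :
    |v| ≤ 2 * b := by
  have hb0 : 0 ≤ b := hs0.trans hsb
  rw [div_le_iff₀ hv] at h
  rcases le_total v 0 with hv0 | hv0
  · have hsq : v ^ 2 ≤ b ^ 2 := by
      nlinarith [mul_nonneg (mul_nonneg hs0 (neg_nonneg.2 hv0)) hv.le,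
        mul_nonneg (sq_nonneg b) (neg_nonneg.2 hv0)]
    linarith [abs_le_of_sq_le_sq hsq hb0]
  · rw [abs_of_nonneg hv0]
    have hsv : s * v ≤ b * v := mul_le_mul_of_nonneg_right hsb hv0
    have hsq : v ^ 2 ≤ (b * v + b ^ 2) * (1 + v) := h.trans (by gcongr)
    by_contra! hlt
    nlinarith [mul_nonneg (sub_nonneg.2 hb) (mul_nonneg hv0 (sub_pos.2 hlt).le),
      mul_nonneg (sub_nonneg.2 hb) (mul_nonneg hb0 hv0), mul_nonneg hb0 (sub_pos.2 hlt).le,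
      mul_pos (sub_pos.2 hlt) (sub_pos.2 hlt)]

theorem abs_le_two_mul_sum_of_sum_sq_div_one_add_le {ι : Type*} [Fintype ι] {s v : ι → ℝ}
    (hs : ∀ i, 0 ≤ s i) (hsum : ∑ i, s i ≤ 1 / 6) (hv : ∀ i, 0 < 1 + v i)
    (h : ∑ i, v i ^ 2 / (1 + v i) ≤ ∑ i, s i * v i) (j : ι) :
    |v j| ≤ 2 * ∑ i, s i := by
  classical
  have hle (i : ι) : s i ≤ ∑ k, s k := single_le_sum (fun k _ ↦ hs k) (mem_univ i)
  refine abs_le_two_mul_of_sq_div_one_add_le hsum (hs j) (hle j) (hv j) ?_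
  have hothers : ∑ i ∈ univ.erase j, (s i * v i - v i ^ 2 / (1 + v i)) ≤ (∑ i, s i) ^ 2 :=
    calc ∑ i ∈ univ.erase j, (s i * v i - v i ^ 2 / (1 + v i))
        ≤ ∑ i ∈ univ.erase j, s i ^ 2 := sum_le_sum fun i _ ↦
          mul_sub_sq_div_one_add_le_sq (hs i) ((hle i).trans (by linarith)) (hv i)
      _ ≤ ∑ i, s i ^ 2 :=
          sum_le_sum_of_subset_of_nonneg (erase_subset _ _) fun i _ _ ↦ sq_nonneg (s i)
      _ ≤ (∑ i, s i) ^ 2 := sum_sq_le_sq_sum_of_nonneg fun i _ ↦ hs i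
  have hsplit := add_sum_erase univ (fun i ↦ s i * v i - v i ^ 2 / (1 + v i)) (mem_univ j)
  simp only [sum_sub_distrib] at hsplit hothers
  linarith

end SmallRelativeChange

section Regularizer

variable {ι : Type*} [Fintype ι]

/-- The continuous linear functional `p ↦ ⟨g, p⟩`. -/
noncomputable def dotProductCLM (g : ι → ℝ) : (ι → ℝ) →L[ℝ] ℝ :=
  (dotProductBilin ℝ ℝ g).toContinuousLinearMap

theorem dotProductCLM_apply (g p : ι → ℝ) : dotProductCLM g p = ∑ i, g i * p i :=
  rfl

theorem hasFDerivAt_dotProduct_mulVec {A : Matrix ι ι ℝ} (hA : A.IsSymm) (p : ι → ℝ) :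
    HasFDerivAt (fun p ↦ p ⬝ᵥ A *ᵥ p) (dotProductCLM ((2 : ℝ) • A *ᵥ p)) p := by
  classical
  have hbilin := (toLinearMap₂' ℝ A).toContinuousBilinearMap.hasFDerivAt_of_bilinear
    (hasFDerivAt_id p) (hasFDerivAt_id p)
  have hcomm (v : ι → ℝ) : p ⬝ᵥ A *ᵥ v = v ⬝ᵥ A *ᵥ p := by
    rw [dotProduct_mulVec, ← mulVec_transpose, hA.eq, dotProduct_comm]
  refine (hbilin.congr_fderiv (ContinuousLinearMap.ext fun v ↦ ?_)).congr_of_eventuallyEq ?_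
  · change toLinearMap₂' ℝ A p v + toLinearMap₂' ℝ A v p = ((2 : ℝ) • A *ᵥ p) ⬝ᵥ v
    rw [toLinearMap₂'_apply', toLinearMap₂'_apply', hcomm, smul_dotProduct, smul_eq_mul, two_mul,
      dotProduct_comm]
  · exact .of_forall fun q ↦ (toLinearMap₂'_apply' A q q).symm

theorem hasFDerivAt_sum_mul_log_one_div (w : ι → ℝ) {p : ι → ℝ} (hp : ∀ i, p i ≠ 0) :
    HasFDerivAt (fun p : ι → ℝ ↦ ∑ i, w i * Real.log (1 / p i))
      (dotProductCLM fun i ↦ -(w i * (1 / p i))) p := by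
  simp only [one_div, Real.log_inv]
  refine (HasFDerivAt.fun_sum fun i _ ↦
    (((hasFDerivAt_apply (𝕜 := ℝ) i p).log (hp i)).neg.const_mul (w i))).congr_fderiv ?_
  ext v
  simp [dotProductCLM_apply, mul_assoc]

/-- The BARRONS regularizer `ψ(p) = (β / 2) pᵀ A p + ∑ i, (1 / η i) ln (1 / p i)`. -/
noncomputable def barronsRegularizer (β : ℝ) (A : Matrix ι ι ℝ) (η p : ι → ℝ) : ℝ :=
  β / 2 * (p ⬝ᵥ A *ᵥ p) + ∑ i, 1 / η i * Real.log (1 / p i)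

theorem hasFDerivAt_barronsRegularizer (β : ℝ) {A : Matrix ι ι ℝ} (hA : A.IsSymm) (η : ι → ℝ)
    {p : ι → ℝ} (hp : ∀ i, p i ≠ 0) :
    HasFDerivAt (barronsRegularizer β A η)
      (dotProductCLM fun i ↦ β * (A *ᵥ p) i - 1 / η i * (1 / p i)) p := by
  refine (((hasFDerivAt_dotProduct_mulVec hA p).const_mul (β / 2)).add
    (hasFDerivAt_sum_mul_log_one_div (fun i ↦ 1 / η i) hp)).congr_fderiv ?_
  ext v
  simp only [_root_.add_apply, _root_.smul_apply, dotProductCLM_apply, smul_eq_mul,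
    Pi.smul_apply, mul_sum, ← sum_add_distrib]
  exact sum_congr rfl fun i _ ↦ by ring

theorem bregmanDiv_barronsRegularizer (β : ℝ) {A : Matrix ι ι ℝ} (hA : A.IsSymm) (η p : ι → ℝ)
    {q : ι → ℝ} (hq : ∀ i, q i ≠ 0) :
    bregmanDiv (barronsRegularizer β A η) p q =
      barronsRegularizer β A η p - barronsRegularizer β A η q -
        ∑ i, (β * (A *ᵥ q) i - 1 / η i * (1 / q i)) * (p i - q i) := by
  rw [bregmanDiv, (hasFDerivAt_barronsRegularizer β hA η hq).fderiv, dotProductCLM_apply]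
  rfl

theorem sum_sq_div_le_fderiv_barronsRegularizer_sub {β : ℝ} (hβ : 0 ≤ β) {A : Matrix ι ι ℝ}
    (hA : A.PosSemidef) (η : ι → ℝ) {x y : ι → ℝ} (hx : ∀ i, x i ≠ 0) (hy : ∀ i, y i ≠ 0) :
    ∑ i, 1 / η i * ((y i - x i) ^ 2 / (x i * y i)) ≤
      (fderiv ℝ (barronsRegularizer β A η) y - fderiv ℝ (barronsRegularizer β A η) x) (y - x) := by
  have hsymm : A.IsSymm := isHermitian_iff_isSymm.1 hA.isHermitian
  have hquad : 0 ≤ (y - x) ⬝ᵥ A *ᵥ (y - x) := hA.dotProduct_mulVec_nonneg (y - x)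
  rw [(hasFDerivAt_barronsRegularizer β hsymm η hx).fderiv,
    (hasFDerivAt_barronsRegularizer β hsymm η hy).fderiv]
  calc ∑ i, 1 / η i * ((y i - x i) ^ 2 / (x i * y i))
      ≤ β * ((y - x) ⬝ᵥ A *ᵥ (y - x)) + ∑ i, 1 / η i * ((y i - x i) ^ 2 / (x i * y i)) :=
        le_add_of_nonneg_left (mul_nonneg hβ hquad)
    _ = _ := by
        rw [_root_.sub_apply, dotProductCLM_apply, dotProductCLM_apply, mulVec_sub, dotProduct,
          mul_sum, ← sum_add_distrib, ← sum_sub_distrib]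
        refine sum_congr rfl fun i _ ↦ ?_
        have := hx i
        have := hy i
        simp only [Pi.sub_apply]
        field_simp
        ring

theorem sum_sq_div_le_of_isMinOn {K : Set (ι → ℝ)} (hK : Convex ℝ K) {β : ℝ} (hβ : 0 ≤ β)
    {A : Matrix ι ι ℝ} (hA : A.PosSemidef) {η g x y : ι → ℝ} (hx : x ∈ K) (hy : y ∈ K)
    (hx0 : ∀ i, x i ≠ 0) (hy0 : ∀ i, y i ≠ 0)
    (hmin : IsMinOn
      (fun p ↦ dotProductCLM g p + bregmanDiv (barronsRegularizer β A η) p x) K y) :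
    ∑ i, 1 / η i * ((y i - x i) ^ 2 / (x i * y i)) ≤ ∑ i, g i * (x i - y i) :=
  have hsymm : A.IsSymm := isHermitian_iff_isSymm.1 hA.isHermitian
  (sum_sq_div_le_fderiv_barronsRegularizer_sub hβ hA η hx0 hy0).trans <|
    fderiv_sub_fderiv_apply_le_of_isMinOn_bregmanDiv hK hx hy
      (hasFDerivAt_barronsRegularizer β hsymm η hy0).differentiableAt hmin

theorem abs_div_sub_one_le_of_isMinOn {K : Set (ι → ℝ)} (hK : Convex ℝ K) {β : ℝ} (hβ : 0 ≤ β)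
    {A : Matrix ι ι ℝ} (hA : A.PosSemidef) {η : ι → ℝ} {b : ℝ} (hη0 : ∀ i, 0 < η i)
    (hηb : ∀ i, η i ≤ b) (hb : b ≤ 1 / 6) {r x y : ι → ℝ} (hr : ∀ i, 0 ≤ r i)
    (hxr : 0 < x ⬝ᵥ r) (hx : x ∈ K) (hy : y ∈ K) (hx0 : ∀ i, 0 < x i) (hy0 : ∀ i, 0 < y i)
    (hmin : IsMinOn (fun p ↦ dotProductCLM (fun i ↦ -r i / (x ⬝ᵥ r)) p +
      bregmanDiv (barronsRegularizer β A η) p x) K y) (j : ι) :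
    |y j / x j - 1| ≤ 2 * b := by
  have hb0 : 0 ≤ b := (hη0 j).le.trans (hηb j)
  have hweights : ∑ i, b * (x i * r i / (x ⬝ᵥ r)) = b := by
    rw [← mul_sum, ← sum_div, ← dotProduct, div_self hxr.ne', mul_one]
  rw [← hweights]
  refine abs_le_two_mul_sum_of_sum_sq_div_one_add_le (v := fun i ↦ y i / x i - 1)
    (fun i ↦ mul_nonneg hb0 (div_nonneg (mul_nonneg (hx0 i).le (hr i)) hxr.le))
    (hweights.trans_le hb) (fun i ↦ by linarith [div_pos (hy0 i) (hx0 i)]) ?_ j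
  calc ∑ i, (y i / x i - 1) ^ 2 / (1 + (y i / x i - 1))
      ≤ ∑ i, b * (1 / η i * ((y i - x i) ^ 2 / (x i * y i))) := sum_le_sum fun i _ ↦ by
        have hxi := hx0 i
        have hyi := hy0 i
        have hηi : 1 ≤ b * (1 / η i) := by
          rw [mul_one_div, one_le_div (hη0 i)]
          exact hηb i
        have hrel : (y i / x i - 1) ^ 2 / (1 + (y i / x i - 1)) =
            (y i - x i) ^ 2 / (x i * y i) := by
          rw [add_sub_cancel]
          field_simp
        rw [hrel, ← mul_assoc]
        exact le_mul_of_one_le_left (by positivity) hηi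
    _ ≤ b * ∑ i, -r i / (x ⬝ᵥ r) * (x i - y i) := by
        rw [← mul_sum]
        exact mul_le_mul_of_nonneg_left (sum_sq_div_le_of_isMinOn hK hβ hA hx hy
          (fun i ↦ (hx0 i).ne') (fun i ↦ (hy0 i).ne') hmin) hb0
    _ = ∑ i, b * (x i * r i / (x ⬝ᵥ r)) * (y i / x i - 1) := by
        rw [mul_sum]
        refine sum_congr rfl fun i _ ↦ ?_
        have := (hx0 i).ne'
        field_simp
        ring

end Regularizer

theorem posSemidef_of_rankOne_updates {ι : Type*} [Finite ι] {A : ℕ → Matrix ι ι ℝ}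
    {g : ℕ → ι → ℝ} {T : ℕ} (hA0 : (A 0).PosSemidef)
    (hA : ∀ t ∈ Icc 1 T, ∀ i j, A t i j = A (t - 1) i j + g t i * g t j) {t : ℕ} (ht : t ≤ T) :
    (A t).PosSemidef := by
  induction t with
  | zero => exact hA0
  | succ t ih =>
    have hupdate : A (t + 1) = A t + vecMulVec (g (t + 1)) (star (g (t + 1))) :=
      Matrix.ext fun i j ↦ hA (t + 1) (mem_Icc.2 ⟨by omega, ht⟩) i j
    rw [hupdate]
    exact (ih (by omega)).add (posSemidef_vecMulVec_self_star _)

/-- The truncated simplex `Δ̄`: probability vectors whose coordinates are all at least `δ`. -/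
def truncatedSimplex (ι : Type*) [Fintype ι] (δ : ℝ) : Set (ι → ℝ) :=
  {p | (∀ i, 0 ≤ p i) ∧ ∑ i, p i = 1 ∧ ∀ i, δ ≤ p i}

theorem convex_truncatedSimplex (ι : Type*) [Fintype ι] (δ : ℝ) :
    Convex ℝ (truncatedSimplex ι δ) := by
  have heq : truncatedSimplex ι δ = stdSimplex ℝ ι ∩ Set.Ici fun _ ↦ δ :=
    Set.ext fun _ ↦ and_assoc.symm
  rw [heq]
  exact (convex_stdSimplex ℝ ι).inter (convex_Ici _)

theorem exp_biSup_log_one_div_div_log_le_three {κ : Type*} {S : Finset κ} {a T : ℝ} (ha : 0 < a)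
    (hT : 1 < T) {u : κ → ℝ} (hu : ∀ s ∈ S, 1 / (a * T) ≤ u s) :
    Real.exp (⨆ s ∈ S, Real.log (1 / (a * u s)) / Real.log T) ≤ 3 := by
  have hterm (s : κ) (hs : s ∈ S) : Real.log (1 / (a * u s)) / Real.log T ≤ 1 := by
    have hus : 0 < u s := lt_of_lt_of_le (by positivity) (hu s hs)
    have hle : 1 / (a * u s) ≤ T := by
      have := hu s hs
      rw [div_le_iff₀ (by positivity)] at this ⊢
      linarith
    exact (div_le_one (Real.log_pos hT)).2 (Real.log_le_log (by positivity) hle)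
  -- Over the reals the inner supremum is `sSup ∅ = 0` when `s ∉ S`, so the bound must be `≥ 0`.
  have hsup : (⨆ s ∈ S, Real.log (1 / (a * u s)) / Real.log T) ≤ 1 :=
    Real.iSup_le (fun s ↦ Real.iSup_le (hterm s) zero_le_one) zero_le_one
  exact (Real.exp_le_exp.2 hsup).trans Real.exp_one_lt_three.le

theorem six_mul_le_sqrt_three_mul_div_two {η : ℝ} (hη0 : 0 ≤ η) (hη : η ≤ 1 / 48) :
    6 * η ≤ Real.sqrt (3 * η) / 2 := by
  have : 12 * η ≤ Real.sqrt (3 * η) := Real.le_sqrt_of_sq_le (by nlinarith)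
  linarith

theorem barrons_stability_general {N T : ℕ} (hT : 1 < T) {β η : ℝ} (hβ : 0 ≤ β) (hη0 : 0 < η)
    (hη : η ≤ 1 / 18) {r : ℕ → Fin N → ℝ}
    (hr : ∀ t ∈ Icc 1 T, (∀ i, 0 ≤ r t i) ∧ ∃ i, 0 < r t i) {x : ℕ → Fin N → ℝ}
    (hxmem : ∀ t ∈ Icc 1 (T + 1),
      (∀ i, 0 ≤ x t i) ∧ ∑ i, x t i = 1 ∧ ∀ i, 1 / ((N : ℝ) * T) ≤ x t i)
    {grad : ℕ → Fin N → ℝ} (hgrad : ∀ t i, grad t i = -(r t i) / ∑ j, x t j * r t j)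
    {A : ℕ → Matrix (Fin N) (Fin N) ℝ} (hA0 : (A 0).PosSemidef)
    (hA : ∀ t ∈ Icc 1 T, ∀ i j, A t i j = A (t - 1) i j + grad t i * grad t j)
    {eta : ℕ → Fin N → ℝ}
    (heta : ∀ t ∈ Icc 1 T, ∀ i, eta t i =
      η * Real.exp (⨆ s ∈ Icc 1 t, Real.log (1 / ((N : ℝ) * x s i)) / Real.log T))
    {psi : ℕ → (Fin N → ℝ) → ℝ}
    (hpsi : ∀ t p, psi t p =
      β / 2 * ∑ i, ∑ j, p i * A t i j * p j + ∑ i, 1 / eta t i * Real.log (1 / p i))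
    {gpsi : ℕ → (Fin N → ℝ) → Fin N → ℝ}
    (hgpsi : ∀ t p i, gpsi t p i = β * (∑ j, A t i j * p j) - 1 / eta t i * (1 / p i))
    {D : ℕ → (Fin N → ℝ) → (Fin N → ℝ) → ℝ}
    (hD : ∀ t p q, D t p q = psi t p - psi t q - ∑ i, gpsi t q i * (p i - q i))
    (hmin : ∀ t ∈ Icc 1 T, ∀ y : Fin N → ℝ,
      ((∀ i, 0 ≤ y i) ∧ ∑ i, y i = 1 ∧ ∀ i, 1 / ((N : ℝ) * T) ≤ y i) →
      ∑ i, x (t + 1) i * grad t i + D t (x (t + 1)) (x t) ≤ ∑ i, y i * grad t i + D t y (x t))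
    {t : ℕ} (ht : t ∈ Icc 1 T) (i : Fin N) :
    |x (t + 1) i / x t i - 1| ≤ 6 * η := by
  obtain ⟨ht1, htT⟩ := mem_Icc.1 ht
  have hN0 : (0 : ℝ) < N := Nat.cast_pos.2 i.pos
  have hT1 : (1 : ℝ) < T := Nat.one_lt_cast.2 hT
  have hxt := hxmem t (mem_Icc.2 ⟨ht1, by omega⟩)
  have hxt' := hxmem (t + 1) (mem_Icc.2 ⟨by omega, by omega⟩)
  have hfloor : (0 : ℝ) < 1 / (N * T) := by positivity
  have hxpos (k : Fin N) : 0 < x t k := hfloor.trans_le (hxt.2.2 k)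
  have hApsd : (A t).PosSemidef := posSemidef_of_rankOne_updates hA0 hA htT
  have hetapos (k : Fin N) : 0 < eta t k := by
    rw [heta t ht k]
    positivity
  have hetale (k : Fin N) : eta t k ≤ η * 3 := by
    rw [heta t ht k]
    exact mul_le_mul_of_nonneg_left (exp_biSup_log_one_div_div_log_le_three hN0 hT1 fun s hs ↦
      (hxmem s (Icc_subset_Icc_right (by omega) hs)).2.2 k) hη0.le
  obtain ⟨hr0, k, hk⟩ := hr t ht
  have hxr : 0 < x t ⬝ᵥ r t :=
    sum_pos' (fun j _ ↦ mul_nonneg (hxpos j).le (hr0 j)) ⟨k, mem_univ k, mul_pos (hxpos k) hk⟩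
  have hpsi' : psi t = barronsRegularizer β (A t) (eta t) := funext fun p ↦ by
    simp only [hpsi, barronsRegularizer, dotProduct, mulVec, mul_sum, mul_assoc]
  have hobj (p : Fin N → ℝ) : ∑ i, p i * grad t i + D t p (x t) =
      dotProductCLM (fun i ↦ -r t i / (x t ⬝ᵥ r t)) p +
        bregmanDiv (barronsRegularizer β (A t) (eta t)) p (x t) := by
    rw [bregmanDiv_barronsRegularizer β (isHermitian_iff_isSymm.1 hApsd.isHermitian) _ _
      fun k ↦ (hxpos k).ne', hD, hpsi', dotProductCLM_apply]
    simp only [hgpsi, hgrad, mul_comm (p _), dotProduct, mulVec]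
  have hstep := abs_div_sub_one_le_of_isMinOn (convex_truncatedSimplex (Fin N) _) hβ hApsd hetapos
    hetale (by linarith) hr0 hxr hxt hxt' hxpos (fun k ↦ hfloor.trans_le (hxt'.2.2 k))
    (fun p hp ↦ by simpa only [Set.mem_ofPred_eq, hobj] using hmin t ht p hp) i
  linarith

/- STATEMENT 5: Lemma 7 of the paper, multiplicative stability of the BARRONS iterates. -/

theorem barrons_stability
    (N T : ℕ) (hN : 2 ≤ N) (hT : N < T)
    (β η : ℝ) (hβ0 : 0 < β) (hβ : β ≤ 1 / 2) (hη0 : 0 < η) (hη : η ≤ 1 / 300)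
    -- reward vectors: nonnegative with maximum coordinate equal to 1
    (r : ℕ → Fin N → ℝ)
    (hr : ∀ t ∈ Finset.Icc 1 T, (∀ i, 0 ≤ r t i) ∧ (∃ i, r t i = 1) ∧ ∀ i, r t i ≤ 1)
    -- the iterates x_1, ..., x_{T+1}
    (x : ℕ → Fin N → ℝ)
    (hx1 : ∀ i, x 1 i = 1 / N)
    (hxmem : ∀ t ∈ Finset.Icc 1 (T + 1),
        (∀ i, 0 ≤ x t i) ∧ (∑ i, x t i) = 1 ∧ ∀ i, 1 / ((N : ℝ) * T) ≤ x t i)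
    -- the gradients ∇_t = -r_t / ⟨x_t, r_t⟩
    (grad : ℕ → Fin N → ℝ)
    (hgrad : ∀ t i, grad t i = -(r t i) / ∑ j, x t j * r t j)
    -- the matrices A_t
    (A : ℕ → Matrix (Fin N) (Fin N) ℝ)
    (hA0 : A 0 = (N : ℝ) • (1 : Matrix (Fin N) (Fin N) ℝ))
    (hA : ∀ t ∈ Finset.Icc 1 T, ∀ i j, A t i j = A (t - 1) i j + grad t i * grad t j)
    -- the individual learning rates η_{t,i}
    (eta : ℕ → Fin N → ℝ)
    (heta : ∀ t ∈ Finset.Icc 1 T, ∀ i,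
        eta t i = η * Real.exp (⨆ s ∈ Finset.Icc 1 t,
          Real.log (1 / ((N : ℝ) * x s i)) / Real.log T))
    -- the regularizer ψ_t, its gradient, and its Bregman divergence
    (psi : ℕ → (Fin N → ℝ) → ℝ)
    (hpsi : ∀ t p, psi t p =
        β / 2 * ∑ i, ∑ j, p i * A t i j * p j + ∑ i, (1 / eta t i) * Real.log (1 / p i))
    (gpsi : ℕ → (Fin N → ℝ) → Fin N → ℝ)
    (hgpsi : ∀ t p i, gpsi t p i = β * (∑ j, A t i j * p j) - (1 / eta t i) * (1 / p i))
    (D : ℕ → (Fin N → ℝ) → (Fin N → ℝ) → ℝ)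
    (hD : ∀ t p q, D t p q = psi t p - psi t q - ∑ i, gpsi t q i * (p i - q i))
    -- x_{t+1} minimizes ⟨x, ∇_t⟩ + D_{ψ_t}(x, x_t) over Δ̄_N
    (hmin : ∀ t ∈ Finset.Icc 1 T, ∀ y : Fin N → ℝ,
        ((∀ i, 0 ≤ y i) ∧ (∑ i, y i) = 1 ∧ ∀ i, 1 / ((N : ℝ) * T) ≤ y i) →
        (∑ i, x (t + 1) i * grad t i) + D t (x (t + 1)) (x t)
          ≤ (∑ i, y i * grad t i) + D t y (x t))
    :
    ∀ t ∈ Finset.Icc 1 (T - 1), ∀ i,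
      1 - Real.sqrt (3 * η) / 2 ≤ x (t + 1) i / x t i ∧
        x (t + 1) i / x t i ≤ 1 + Real.sqrt (3 * η) / 2 := by
  intro t ht i
  have hbound := (barrons_stability_general (by omega) hβ0.le hη0 (hη.trans (by norm_num))
    (fun t ht ↦ ⟨(hr t ht).1, (hr t ht).2.1.imp fun _ hi ↦ one_pos.trans_le hi.ge⟩) hxmem hgrad
    (hA0 ▸ PosSemidef.one.smul N.cast_nonneg) hA heta hpsi hgpsi hD hmin
    (Icc_subset_Icc_right (T.sub_le 1) ht) i).trans
    (six_mul_le_sqrt_three_mul_div_two hη0.le (hη.trans (by norm_num)))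
  constructor <;> linarith [abs_le.1 hbound]
end
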